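/- arXiv:math/0301245 — 2 statements merged into one kernel-verified Lean document; each statement's English description precedes it below -/
import Mathlib

section
/- (Lemma 12) Let t_0 be a rooted tree with N vertices and let c be an integer with |c| ≤ |χ(t_0)|. Then there exists a finite sequence of rooted trees t_1, …, t_k such that χ(t_k) = c, for each i = 1, …, k the tree t_{i−1} is obtained from t_i by contracting an edge, and k ≤ 3 + 3·log₂ N. -/
open SimpleGraph

/-- A rooted tree on vertex set `Fin n`: a connected acyclic simple graph
with a distinguished root vertex. -/
structure RTree (n : ℕ) where
  adj : SimpleGraph (Fin n)
  connected : adj.Connected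
  acyclic : adj.IsAcyclic
  root : Fin n

/-- `v` is a leaf of the rooted tree `t`: a vertex of degree one other than the
root, except that in the one-vertex tree the root counts as a leaf. -/
def IsLeafV {n : ℕ} (t : RTree n) (v : Fin n) : Prop :=
  n = 1 ∨ ((t.adj.neighborSet v).ncard = 1 ∧ v ≠ t.root)

/-- The number of leaves of a rooted tree. -/
noncomputable def numLeaves {n : ℕ} (t : RTree n) : ℕ :=
  Nat.card {v : Fin n // IsLeafV t v}

/-- Root-preserving isomorphism of rooted trees. -/
def treeSetoid (n : ℕ) : Setoid (RTree n) where
  r t t' := ∃ e : t.adj ≃g t'.adj, e t.root = t'.root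
  iseqv := by
    constructor
    · intro t; exact ⟨RelIso.refl _, rfl⟩
    · rintro t t' ⟨e, he⟩
      exact ⟨e.symm, by rw [← he]; exact e.symm_apply_apply t.root⟩
    · rintro a b c ⟨e, he⟩ ⟨f, hf⟩
      exact ⟨e.trans f, by simp [RelIso.trans_apply, he, hf]⟩

/-- `aCount n k` : the number of isomorphism classes of rooted trees with `n`
vertices and exactly `k` leaves. -/
noncomputable def aCount (n k : ℕ) : ℕ :=
  Nat.card (Quotient (Setoid.comap
    (Subtype.val : {t : RTree n // numLeaves t = k} → RTree n)
    (treeSetoid n)))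

/-- `χ(t)`: the number of vertices at odd distance from the root minus the
number of vertices at even distance from the root (the root counts among the
latter). -/
noncomputable def chi {n : ℕ} (t : RTree n) : ℤ :=
  (Nat.card {v : Fin n // Odd (t.adj.dist t.root v)} : ℤ) -
    (Nat.card {v : Fin n // Even (t.adj.dist t.root v)} : ℤ)

/-- `t'` is obtained from `t` by contracting an edge: some edge `{u,w}` of `t`
together with its endpoints is replaced by a single vertex, all other
adjacencies being preserved; the root is preserved by the contraction map. -/
def ContractsTo {n : ℕ} (t : RTree (n + 1)) (t' : RTree n) : Prop :=
  ∃ (u w : Fin (n + 1)) (f : Fin (n + 1) → Fin n),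
    t.adj.Adj u w ∧ f u = f w ∧
    Set.InjOn f {w}ᶜ ∧
    Function.Surjective f ∧
    f t.root = t'.root ∧
    ∀ a b : Fin n, t'.adj.Adj a b ↔
      (a ≠ b ∧ ∃ a' b' : Fin (n + 1), f a' = a ∧ f b' = b ∧ t.adj.Adj a' b')


lemma reach_split {V : Type*} (H : SimpleGraph V) (r c : V) (hrc : H.Adj r c) (v : V) :
    H.Reachable r v ↔ ((H.deleteEdges {s(r,c)}).Reachable r v ∨ (H.deleteEdges {s(r,c)}).Reachable c v) := by
  have hle : H.deleteEdges {s(r,c)} ≤ H := deleteEdges_le _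
  constructor
  · rintro h
    rw [reachable_iff_reflTransGen] at h
    induction h with
    | refl => exact Or.inl (Reachable.refl _)
    | @tail x y _ hxy ih =>
      by_cases he : s(x,y) = s(r,c)
      · rw [Sym2.eq_iff] at he
        rcases he with ⟨rfl, rfl⟩ | ⟨rfl, rfl⟩
        · exact Or.inr (Reachable.refl _)
        · exact Or.inl (Reachable.refl _)
      · have : (H.deleteEdges {s(r,c)}).Adj x y := by
          rw [deleteEdges_adj]; exact ⟨hxy, he⟩
        exact ih.imp (fun h => h.trans this.reachable) (fun h => h.trans this.reachable)
  · rintro (h | h)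
    · exact h.mono hle
    · exact hrc.reachable.trans (h.mono hle)

/-- `l` lists the component of `r` in `H`, root last; every prefix has a small cover. -/
def Sweep {V : Type*} [DecidableEq V] (H : SimpleGraph V) (r : V) (p : ℕ) (b : Prop) (l : List V) : Prop :=
  (l ++ [r]).Nodup ∧ (∀ v, v ∈ l ++ [r] ↔ H.Reachable r v) ∧ 2 ^ p ≤ (l ++ [r]).length ∧
  ∀ x y, l ++ [r] = x ++ y → ∃ M : Finset V, M.card ≤ p ∧ (b → r ∈ M) ∧
    ∀ u ∈ x, ∀ w ∈ y, H.Adj u w → u ∈ M ∨ w ∈ M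

lemma sweep_join {V : Type*} [DecidableEq V] (H : SimpleGraph V) (r c : V) (hrc : H.Adj r c)
    (hb : ¬ (H.deleteEdges {s(r,c)}).Reachable r c) (p₁ p₂ : ℕ) (b₁ b₂ : Prop) (l₁ l₂ : List V)
    (h₁ : Sweep (H.deleteEdges {s(r,c)}) c p₁ b₁ l₁) (h₂ : Sweep (H.deleteEdges {s(r,c)}) r p₂ b₂ l₂) :
    ∃ p b l, Sweep H r p b l := by
  obtain ⟨n₁, e₁, s₁, c₁⟩ := h₁
  obtain ⟨n₂, e₂, s₂, c₂⟩ := h₂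
  have hsplit := reach_split H r c hrc
  set H' := H.deleteEdges {s(r,c)} with hH'
  have hdisj : ∀ v, v ∈ l₁ ++ [c] → v ∈ l₂ ++ [r] → False := by
    intro v hv hv'
    exact hb (((e₂ v).1 hv').trans ((e₁ v).1 hv).symm)
  have hcross : ∀ u ∈ l₁ ++ [c], ∀ w ∈ l₂ ++ [r], H.Adj u w → u = c ∧ w = r := by
    intro u hu w hw h
    by_contra hne
    have : H'.Adj u w := by
      rw [hH', deleteEdges_adj]
      refine ⟨h, ?_⟩
      simp only [Set.mem_singleton_iff, Sym2.eq_iff]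
      rintro (⟨rfl, rfl⟩ | h)
      · exact hdisj u hu (by simp)
      · exact hne h
    exact hb (((e₂ w).1 hw).trans (this.symm.reachable.trans ((e₁ u).1 hu).symm))
  have hin₁ : ∀ u ∈ l₁ ++ [c], ∀ w ∈ l₁ ++ [c], H.Adj u w → H'.Adj u w := by
    intro u hu w hw h
    rw [hH', deleteEdges_adj]
    refine ⟨h, ?_⟩
    simp only [Set.mem_singleton_iff, Sym2.eq_iff]
    rintro (⟨rfl, rfl⟩ | ⟨rfl, rfl⟩)
    · exact hdisj u hu (by simp)
    · exact hdisj w hw (by simp)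
  have hin₂ : ∀ u ∈ l₂ ++ [r], ∀ w ∈ l₂ ++ [r], H.Adj u w → H'.Adj u w := by
    intro u hu w hw h
    rw [hH', deleteEdges_adj]
    refine ⟨h, ?_⟩
    simp only [Set.mem_singleton_iff, Sym2.eq_iff]
    rintro (⟨rfl, rfl⟩ | ⟨rfl, rfl⟩)
    · exact hdisj w (by simp) hw
    · exact hdisj u (by simp) hu
  have hnod : ((l₁ ++ [c]) ++ (l₂ ++ [r])).Nodup := by
    rw [List.nodup_append]
    refine ⟨n₁, n₂, ?_⟩
    intro a ha b hb hab
    exact hdisj a ha (hab ▸ hb)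
  have hmem : ∀ v, v ∈ ((l₁ ++ [c]) ++ (l₂ ++ [r])) ↔ H.Reachable r v := by
    intro v
    rw [hsplit, List.mem_append, e₁, e₂, or_comm]
  have hins : ∀ M : Finset V, (insert r M).card ≤ M.card + 1 := fun M => Finset.card_insert_le _ _
  rcases lt_or_ge p₁ p₂ with hp | hp
  · -- the root side dominates
    have hperm : ((l₁ ++ [c]) ++ (l₂ ++ [r])).Perm ((l₂ ++ (l₁ ++ [c])) ++ [r]) := by
      rw [← List.append_assoc]
      exact List.Perm.append_right _ List.perm_append_comm
    refine ⟨p₂, b₂, l₂ ++ (l₁ ++ [c]), hperm.nodup_iff.1 hnod, ?_, ?_, ?_⟩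
    · intro v; rw [← hmem, hperm.mem_iff]
    · rw [← hperm.length_eq, List.length_append]; omega
    · intro x y hxy
      rw [List.append_assoc, List.append_eq_append_iff] at hxy
      rcases hxy with ⟨z, rfl, hz⟩ | ⟨z, hz, rfl⟩
      · rw [List.append_eq_append_iff] at hz
        rcases hz with ⟨z', rfl, hz'⟩ | ⟨z', hz', rfl⟩
        · obtain ⟨M, hM, -, -⟩ := c₁ (l₁ ++ [c]) [] (by simp)
          refine ⟨insert r M, by have := hins M; omega, by simp, ?_⟩
          intro u hu w hw h
          cases z' with
          | nil => simp at hz'; subst hz'; simp at hw; subst hw; simp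
          | cons a z' => simp at hz'; grind
        · obtain ⟨M, hM, -, hM'⟩ := c₁ z z' hz'
          refine ⟨insert r M, by have := hins M; omega, by simp, ?_⟩
          have hzm : ∀ a ∈ z, a ∈ l₁ ++ [c] := by rw [hz']; simp +contextual
          have hzm' : ∀ a ∈ z', a ∈ l₁ ++ [c] := by rw [hz']; simp +contextual
          intro u hu w hw h
          rw [List.mem_append] at hu hw
          rcases hw with hw | hw
          · rcases hu with hu | hu
            · have := (hcross w (hzm' w hw) u (by simp [hu]) h.symm).2
              simp [this]
            · have := hM' u hu w hw (hin₁ _ (hzm u hu) _ (hzm' w hw) h)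
              simp only [Finset.mem_insert]; tauto
          · simp at hw; simp [hw]
      · obtain ⟨M, hM, hr, hM'⟩ := c₂ x (z ++ [r]) (by rw [hz]; simp)
        refine ⟨M, hM, hr, ?_⟩
        intro u hu w hw h
        have hul : u ∈ l₂ := by rw [hz]; simp [hu]
        simp only [List.mem_append] at hw
        have key : w ∈ z ++ [r] → u ∈ M ∨ w ∈ M := by
          intro hw'
          refine hM' u hu w hw' (hin₂ _ (by simp [hul]) _ ?_ h)
          rw [hz]; simp at hw' ⊢; tauto
        rcases hw with hw | (hw | hw) | hw
        · exact key (by simp [hw])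
        · have h1 := (hcross w (by simp [hw]) u (by simp [hul]) h.symm).2
          subst h1; simp [List.nodup_append] at n₂; tauto
        · have h1 := (hcross w (by simp at hw; simp [hw]) u (by simp [hul]) h.symm).2
          subst h1; simp [List.nodup_append] at n₂; tauto
        · exact key (by simp at hw; simp [hw])
  · have hmem' : ∀ v, v ∈ (((l₁ ++ [c]) ++ l₂) ++ [r]) ↔ H.Reachable r v := by
      intro v; rw [List.append_assoc, hmem]
    have hnod' : (((l₁ ++ [c]) ++ l₂) ++ [r]).Nodup := by rwa [List.append_assoc]
    have phase2 : ∀ z y, l₂ ++ [r] = z ++ y → ∃ M : Finset V, M.card ≤ p₂ + 1 ∧ (b₂ → M.card ≤ p₂) ∧ r ∈ M ∧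
        ∀ u ∈ (l₁ ++ [c]) ++ z, ∀ w ∈ y, H.Adj u w → u ∈ M ∨ w ∈ M := by
      intro z y hzy
      obtain ⟨M, hM, hr, hM'⟩ := c₂ z y hzy
      refine ⟨insert r M, by have := hins M; omega, ?_, by simp, ?_⟩
      · intro hb2; rw [Finset.insert_eq_self.2 (hr hb2)]; exact hM
      · intro u hu w hw h
        have hw2 : w ∈ l₂ ++ [r] := by rw [hzy]; simp [hw]
        rw [List.mem_append] at hu
        rcases hu with hu | hu
        · have := (hcross u hu w hw2 h).2
          simp [this]
        · have := hM' u hu w hw (hin₂ _ (by rw [hzy]; simp [hu]) _ hw2 h)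
          simp only [Finset.mem_insert]; tauto
    by_cases hq : p₂ = p₁ ∧ ¬ b₂
    · refine ⟨p₁ + 1, True, (l₁ ++ [c]) ++ l₂, hnod', hmem', ?_, ?_⟩
      · obtain ⟨rfl, -⟩ := hq
        rw [List.append_assoc, List.length_append, pow_succ]; omega
      · intro x y hxy
        rw [List.append_assoc, List.append_eq_append_iff] at hxy
        rcases hxy with ⟨z, rfl, hz⟩ | ⟨z, hz, rfl⟩
        · obtain ⟨M, h1, -, h3, h4⟩ := phase2 z y hz
          exact ⟨M, by omega, fun _ => h3, h4⟩
        · obtain ⟨M, hM, -, hM'⟩ := c₁ x z hz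
          refine ⟨insert r M, by have := hins M; omega, by simp, ?_⟩
          intro u hu w hw h
          have hul : u ∈ l₁ ++ [c] := by rw [hz]; simp [hu]
          rw [List.mem_append] at hw
          rcases hw with hw | hw
          · have := hM' u hu w hw (hin₁ _ hul _ (by rw [hz]; simp [hw]) h)
            simp only [Finset.mem_insert]; tauto
          · have := (hcross u hul w hw h).2
            simp [this]
    · have hpp : p₂ + 1 ≤ p₁ ∨ b₂ := by
        by_cases hb2 : b₂
        · exact Or.inr hb2
        · left
          have : p₂ ≠ p₁ := fun h => hq ⟨h, hb2⟩
          omega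
      refine ⟨p₁, False, (l₁ ++ [c]) ++ l₂, hnod', hmem', ?_, ?_⟩
      · rw [List.append_assoc, List.length_append]; omega
      · intro x y hxy
        rw [List.append_assoc, List.append_eq_append_iff] at hxy
        have main : ∀ z, x = (l₁ ++ [c]) ++ z → l₂ ++ [r] = z ++ y → ∃ M : Finset V, M.card ≤ p₁ ∧ (False → r ∈ M) ∧
            ∀ u ∈ x, ∀ w ∈ y, H.Adj u w → u ∈ M ∨ w ∈ M := by
          rintro z rfl hz
          obtain ⟨M, h1, h2, h3, h4⟩ := phase2 z y hz
          refine ⟨M, ?_, fun h => h.elim, h4⟩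
          rcases hpp with h | h
          · omega
          · have := h2 h; omega
        rcases hxy with ⟨z, hx, hz⟩ | ⟨z, hz, rfl⟩
        · exact main z hx hz
        · rcases List.eq_nil_or_concat z with rfl | ⟨z', a, rfl⟩
          · exact main [] (by simpa using hz.symm) (by simp)
          · obtain ⟨M, hM, -, hM'⟩ := c₁ x _ hz
            refine ⟨M, hM, fun h => h.elim, ?_⟩
            intro u hu w hw h
            have hul : u ∈ l₁ ++ [c] := by rw [hz]; simp [hu]
            rw [List.mem_append] at hw
            rcases hw with hw | hw
            · exact hM' u hu w hw (hin₁ _ hul _ (by rw [hz]; exact List.mem_append_right _ hw) h)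
            · have h1 := (hcross u hul w hw h).1
              subst h1
              exfalso
              have h2 : l₁ = x ++ z' := by
                have := congrArg List.dropLast hz
                simpa [← List.append_assoc] using this
              rw [h2] at n₁
              simp [List.nodup_append] at n₁
              exact n₁.2.2 _ hu _ (Or.inr rfl) rfl

lemma sweep_exists {V : Type*} [Finite V] [DecidableEq V] (n : ℕ) :
    ∀ (H : SimpleGraph V), H.edgeSet.ncard = n → H.IsAcyclic → ∀ r, ∃ p b l, Sweep H r p b l := by
  induction n using Nat.strong_induction_on with
  | _ n ih =>
    intro H hn hH r
    by_cases hc : ∃ c, H.Adj r c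
    · obtain ⟨c, hc⟩ := hc
      have hlt : (H.deleteEdges {s(r,c)}).edgeSet.ncard < n := by
        rw [← hn]
        apply Set.ncard_lt_ncard _ (Set.toFinite _)
        rw [edgeSet_deleteEdges]
        refine ⟨Set.sdiff_subset, fun h => ?_⟩
        exact (h (show s(r,c) ∈ H.edgeSet from hc)).2 rfl
      have hac : (H.deleteEdges {s(r,c)}).IsAcyclic := hH.anti (deleteEdges_le _)
      obtain ⟨p₁, b₁, l₁, h₁⟩ := ih _ hlt _ rfl hac c
      obtain ⟨p₂, b₂, l₂, h₂⟩ := ih _ hlt _ rfl hac r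
      refine sweep_join H r c hc ?_ _ _ _ _ _ _ h₁ h₂
      have := isAcyclic_iff_forall_adj_isBridge.1 hH hc
      rw [isBridge_iff] at this
      first | exact this.2 | exact this
    · refine ⟨0, False, [], by simp, ?_, by simp, ?_⟩
      · intro v
        simp only [List.nil_append, List.mem_singleton]
        constructor
        · rintro rfl; exact Reachable.refl _
        · intro h
          rw [reachable_iff_reflTransGen] at h
          rcases Relation.ReflTransGen.cases_head h with h | ⟨d, h, -⟩
          · exact h.symm
          · exact (hc ⟨d, h⟩).elim
      · intro x y hxy
        refine ⟨∅, by simp, fun h => h.elim, ?_⟩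
        intro u hu w hw h
        have h1 : u ∈ [r] := by rw [← List.nil_append [r], hxy]; simp [hu]
        have h2 : w ∈ [r] := by rw [← List.nil_append [r], hxy]; simp [hw]
        simp at h1 h2
        subst h1; subst h2
        exact (H.loopless.irrefl _ h).elim

/-- The graph obtained by splitting `v`: the neighbours in `S` are moved to the new vertex. -/
def splitGraph {n : ℕ} (G : SimpleGraph (Fin n)) (v : Fin n) (S : Set (Fin n)) :
    SimpleGraph (Fin (n + 1)) where
  Adj x y :=
    (∃ a b, x = Fin.castSucc a ∧ y = Fin.castSucc b ∧ G.Adj a b ∧ ¬(a = v ∧ b ∈ S) ∧ ¬(b = v ∧ a ∈ S)) ∨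
    (∃ b, x = Fin.last n ∧ y = Fin.castSucc b ∧ (b = v ∨ (b ∈ S ∧ G.Adj v b))) ∨
    (∃ a, y = Fin.last n ∧ x = Fin.castSucc a ∧ (a = v ∨ (a ∈ S ∧ G.Adj v a)))
  symm := ⟨by
    rintro x y (⟨a, b, h1, h2, h3, h4, h5⟩ | h | h)
    · exact Or.inl ⟨b, a, h2, h1, h3.symm, h5, h4⟩
    · exact Or.inr (Or.inr h)
    · exact Or.inr (Or.inl h)⟩
  loopless := ⟨by
    rintro x (⟨a, b, h1, h2, h3, h4, h5⟩ | ⟨b, h1, h2, h⟩ | ⟨b, h1, h2, h⟩)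
    · rw [h1] at h2
      exact h3.ne (Fin.castSucc_injective _ h2)
    · rw [h1] at h2
      exact (Fin.castSucc_lt_last b).ne h2.symm
    · rw [h1] at h2
      exact (Fin.castSucc_lt_last b).ne h2.symm⟩

section
variable {n : ℕ} (G : SimpleGraph (Fin n)) (v : Fin n) (S : Set (Fin n))

lemma split_cc (a b : Fin n) : (splitGraph G v S).Adj a.castSucc b.castSucc ↔
    G.Adj a b ∧ ¬(a = v ∧ b ∈ S) ∧ ¬(b = v ∧ a ∈ S) := by
  simp [splitGraph, Fin.castSucc_ne_last]

lemma split_lc (b : Fin n) : (splitGraph G v S).Adj (Fin.last n) b.castSucc ↔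
    (b = v ∨ (b ∈ S ∧ G.Adj v b)) := by
  simp [splitGraph, Fin.castSucc_ne_last, (Fin.castSucc_ne_last _).symm]

lemma split_cl (b : Fin n) : (splitGraph G v S).Adj b.castSucc (Fin.last n) ↔
    (b = v ∨ (b ∈ S ∧ G.Adj v b)) := by
  rw [SimpleGraph.adj_comm, split_lc]

lemma split_connected (hG : G.Connected) : (splitGraph G v S).Connected := by
  have hadj : ∀ a b, G.Adj a b → (splitGraph G v S).Reachable a.castSucc b.castSucc := by
    intro a b hab
    have hlv : (splitGraph G v S).Adj (Fin.last n) v.castSucc := by rw [split_lc]; simp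
    by_cases h1 : a = v ∧ b ∈ S
    · obtain ⟨rfl, hb⟩ := h1
      have : (splitGraph G a S).Adj (Fin.last n) b.castSucc := by rw [split_lc]; exact Or.inr ⟨hb, hab⟩
      exact hlv.symm.reachable.trans this.reachable
    · by_cases h2 : b = v ∧ a ∈ S
      · obtain ⟨rfl, hb⟩ := h2
        have : (splitGraph G b S).Adj (Fin.last n) a.castSucc := by rw [split_lc]; exact Or.inr ⟨hb, hab.symm⟩
        exact this.symm.reachable.trans hlv.reachable
      · exact Adj.reachable ((split_cc G v S a b).2 ⟨hab, h1, h2⟩)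
  have hre : ∀ a : Fin n, (splitGraph G v S).Reachable v.castSucc a.castSucc := by
    intro a
    have h := hG.preconnected v a
    rw [reachable_iff_reflTransGen] at h
    induction h with
    | refl => exact Reachable.refl _
    | tail _ hxy ih => exact ih.trans (hadj _ _ hxy)
  have hall : ∀ x, (splitGraph G v S).Reachable v.castSucc x := by
    intro x
    refine Fin.lastCases ?_ (fun a => hre a) x
    exact Adj.reachable ((split_cl G v S v).2 (Or.inl rfl))
  have : Nonempty (Fin (n + 1)) := ⟨Fin.last n⟩
  exact ⟨fun x y => (hall x).symm.trans (hall y)⟩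

/-- The contraction map. -/
def collapse (v : Fin n) : Fin (n + 1) → Fin n := Fin.lastCases v id

@[simp] lemma collapse_last : collapse v (Fin.last n) = v := by simp [collapse]
@[simp] lemma collapse_cs (a : Fin n) : collapse v a.castSucc = a := by simp [collapse]

lemma split_adj_collapse (x y : Fin (n + 1)) (h : (splitGraph G v S).Adj x y)
    (hne : s(x, y) ≠ s(v.castSucc, Fin.last n)) : G.Adj (collapse v x) (collapse v y) := by
  induction x using Fin.lastCases with
  | last =>
    induction y using Fin.lastCases with
    | last => exact (h.ne rfl).elim
    | cast b =>
      rw [split_lc] at h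
      rcases h with rfl | h
      · exact (hne Sym2.eq_swap).elim
      · simpa using h.2
  | cast a =>
    induction y using Fin.lastCases with
    | last =>
      rw [split_cl] at h
      rcases h with rfl | h
      · exact (hne rfl).elim
      · simpa using h.2.symm
    | cast b =>
      rw [split_cc] at h
      simpa using h.1

lemma split_inj (x y x' y' : Fin (n + 1)) (h : (splitGraph G v S).Adj x y)
    (h' : (splitGraph G v S).Adj x' y')
    (hne : s(x, y) ≠ s(v.castSucc, Fin.last n)) (hne' : s(x', y') ≠ s(v.castSucc, Fin.last n))
    (hx : collapse v x = collapse v x') (hy : collapse v y = collapse v y') : x = x' ∧ y = y' := by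
  have hc := split_adj_collapse G v S x y h hne
  have hc' := split_adj_collapse G v S x' y' h' hne'
  have hv : ¬ G.Adj v v := G.loopless.irrefl v
  have hl : ∀ a : Fin n, a.castSucc ≠ Fin.last n := fun a => Fin.castSucc_ne_last a
  induction x using Fin.lastCases <;> induction y using Fin.lastCases <;>
    induction x' using Fin.lastCases <;> induction y' using Fin.lastCases <;>
    simp only [collapse_last, collapse_cs] at hx hy hc hc' <;>
    simp only [split_cc, split_lc, split_cl, Sym2.eq_iff, ne_eq] at h h' hne hne' <;>
    subst_vars <;> first | exact ⟨rfl, rfl⟩ | (exfalso; grind)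

lemma split_acyclic (hG : G.Connected) (hA : G.IsAcyclic) : (splitGraph G v S).IsAcyclic := by
  have hT : G.IsTree := ⟨hG, hA⟩
  have h1 := (isTree_iff_connected_and_card.1 hT).2
  have hC := split_connected G v S hG
  have h2 := hC.card_vert_le_card_edgeSet_add_one
  have h3 : ((splitGraph G v S).edgeSet \ {s(v.castSucc, Fin.last n)}).ncard ≤ G.edgeSet.ncard := by
    apply Set.ncard_le_ncard_of_injOn (Sym2.map (collapse v))
    · intro e he
      induction e with
      | h x y => exact split_adj_collapse G v S x y he.1 he.2
    · intro e he e' he' hee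
      induction e with
      | h x y =>
        induction e' with
        | h x' y' =>
          simp only [Sym2.map_mk, Sym2.eq_iff] at hee
          rcases hee with ⟨h4, h5⟩ | ⟨h4, h5⟩
          · obtain ⟨rfl, rfl⟩ := split_inj G v S x y x' y' he.1 he'.1 he.2 he'.2 h4 h5
            rfl
          · obtain ⟨rfl, rfl⟩ := split_inj G v S x y y' x' he.1 (SimpleGraph.Adj.symm he'.1) he.2
              (by rw [Sym2.eq_swap]; exact he'.2) h4 h5
            exact Sym2.eq_swap
  have h4 : (splitGraph G v S).edgeSet.ncard ≤
      ((splitGraph G v S).edgeSet \ {s(v.castSucc, Fin.last n)}).ncard + 1 := by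
    have := Set.ncard_le_ncard_sdiff_add_ncard (splitGraph G v S).edgeSet {s(v.castSucc, Fin.last n)}
    simpa using this
  refine (isTree_iff_connected_and_card.2 ⟨hC, ?_⟩).isAcyclic
  rw [← Nat.card_coe_set_eq, ← Nat.card_coe_set_eq] at *
  simp only [Nat.card_eq_fintype_card (α := Fin _), Fintype.card_fin] at *
  omega
end

/-- Splitting a vertex of a rooted tree. -/
def splitTree {n : ℕ} (t : RTree n) (v : Fin n) (S : Set (Fin n)) : RTree (n + 1) where
  adj := splitGraph t.adj v S
  connected := split_connected _ _ _ t.connected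
  acyclic := split_acyclic _ _ _ t.connected t.acyclic
  root := t.root.castSucc

lemma splitTree_contracts {n : ℕ} (t : RTree n) (v : Fin n) (S : Set (Fin n)) :
    ContractsTo (splitTree t v S) t := by
  refine ⟨v.castSucc, Fin.last n, collapse v, ?_, by simp, ?_, ?_, by simp [splitTree], ?_⟩
  · exact (split_cl _ _ _ _).2 (Or.inl rfl)
  · intro x hx y hy hxy
    induction x using Fin.lastCases with
    | last => simp at hx
    | cast a =>
      induction y using Fin.lastCases with
      | last => simp at hy
      | cast b => simp at hxy; rw [hxy]
  · intro a; exact ⟨a.castSucc, by simp⟩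
  · intro a b
    constructor
    · intro h
      refine ⟨h.ne, ?_⟩
      by_cases h1 : a = v ∧ b ∈ S
      · refine ⟨Fin.last n, b.castSucc, by simp [h1.1], by simp, (split_lc _ _ _ _).2 (Or.inr ⟨h1.2, h1.1 ▸ h⟩)⟩
      · by_cases h2 : b = v ∧ a ∈ S
        · refine ⟨a.castSucc, Fin.last n, by simp, by simp [h2.1], (split_cl _ _ _ _).2 (Or.inr ⟨h2.2, h2.1 ▸ h.symm⟩)⟩
        · exact ⟨a.castSucc, b.castSucc, by simp, by simp, (split_cc _ _ _ _ _).2 ⟨h, h1, h2⟩⟩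
    · rintro ⟨hab, x, y, rfl, rfl, h⟩
      refine split_adj_collapse _ _ _ _ _ h ?_
      intro he
      rw [Sym2.eq_iff] at he
      rcases he with ⟨rfl, rfl⟩ | ⟨rfl, rfl⟩ <;> simp at hab

/-- `t` is reached from `t₀` by `k` inverse contractions. -/
inductive Reaches {N : ℕ} (t₀ : RTree N) : (k : ℕ) → RTree (N + k) → Prop
  | zero : Reaches t₀ 0 t₀
  | step (k : ℕ) (t : RTree (N + k)) (tnew : RTree (N + k + 1)) :
      Reaches t₀ k t → ContractsTo tnew t → Reaches t₀ (k + 1) tnew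

/-- A filler sequence of trees. -/
def filler {N : ℕ} (t₀ : RTree N) : (i : ℕ) → RTree (N + i)
  | 0 => t₀
  | i + 1 => splitTree (filler t₀ i) (filler t₀ i).root ∅

lemma Reaches.seq {N : ℕ} {t₀ : RTree N} {k : ℕ} {t : RTree (N + k)} (h : Reaches t₀ k t) :
    ∃ T : (i : ℕ) → RTree (N + i), T 0 = t₀ ∧ T k = t ∧
      ∀ i, i < k → ContractsTo (T (i + 1)) (T i) := by
  induction h with
  | zero => exact ⟨filler t₀, rfl, rfl, by simp⟩
  | step k t t' _ hc ih =>
    obtain ⟨T, h0, hk, hT⟩ := ih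
    refine ⟨Function.update T (k + 1) t', ?_, ?_, ?_⟩
    · rw [Function.update_of_ne (by omega)]; exact h0
    · simp
    · intro i hi
      rw [Function.update_of_ne (show i ≠ k + 1 by omega)]
      by_cases hik : i = k
      · subst hik
        rw [Function.update_self, hk]; exact hc
      · rw [Function.update_of_ne (by omega)]
        exact hT i (by omega)

lemma chi_eq {n : ℕ} (t : RTree n) (σ : Fin n → ℤ) (hr : σ t.root = 1)
    (hσ : ∀ a b, t.adj.Adj a b → σ b = - σ a) : chi t = - ∑ v, σ v := by
  have hw : ∀ (u v : Fin n) (p : t.adj.Walk u v), σ v = σ u * (-1) ^ p.length := by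
    intro u v p
    induction p with
    | nil => simp
    | cons h p ih => rw [ih, hσ _ _ h, Walk.length_cons, pow_succ]; ring
  have hd : ∀ v, σ v = (-1) ^ (t.adj.dist t.root v) := by
    intro v
    obtain ⟨p, hp⟩ := t.connected.exists_walk_length_eq_dist t.root v
    rw [hw _ _ p, hp, hr, one_mul]
  classical
  unfold chi
  rw [Nat.card_eq_fintype_card, Nat.card_eq_fintype_card, Fintype.card_subtype, Fintype.card_subtype,
    Finset.card_filter, Finset.card_filter]
  push_cast
  rw [← Finset.sum_sub_distrib, ← Finset.sum_neg_distrib]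
  refine Finset.sum_congr rfl fun v _ => ?_
  rw [hd]
  rcases Nat.even_or_odd (t.adj.dist t.root v) with h | h
  · simp [h, Nat.not_odd_iff_even.2 h]
  · simp [h, Nat.not_even_iff_odd.2 h]

/-- One splitting step guided by a target sign function. -/
lemma guided_step {n : ℕ} (t : RTree n) (σ : Fin n → ℤ) (hs : ∀ v, σ v = 1 ∨ σ v = -1)
    (hr : σ t.root = 1) (v : Fin n) :
    ∃ (t' : RTree (n + 1)) (σ' : Fin (n + 1) → ℤ), ContractsTo t' t ∧
      (∀ v, σ' v = 1 ∨ σ' v = -1) ∧ σ' t'.root = 1 ∧ ∑ x, σ' x = ∑ x, σ x - σ v ∧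
      (∀ a : Fin n, σ' a.castSucc = σ a) ∧
      ∀ x y, t'.adj.Adj x y → σ' x = σ' y → ∃ a b, x = Fin.castSucc a ∧ y = Fin.castSucc b ∧
        t.adj.Adj a b ∧ σ a = σ b ∧ a ≠ v ∧ b ≠ v := by
  have hl : (Fin.snoc σ (-σ v) : Fin (n + 1) → ℤ) (Fin.last n) = -σ v := Fin.snoc_last (α := fun _ => ℤ) _ _
  have hc : ∀ a : Fin n, (Fin.snoc σ (-σ v) : Fin (n + 1) → ℤ) a.castSucc = σ a :=
    fun a => Fin.snoc_castSucc (α := fun _ => ℤ) _ _ _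
  refine ⟨splitTree t v {b | σ b = σ v}, Fin.snoc σ (-σ v), splitTree_contracts _ _ _, ?_, ?_, ?_, hc, ?_⟩
  · intro x
    induction x using Fin.lastCases with
    | last => rw [hl]; rcases hs v with h | h <;> simp [h]
    | cast a => rw [hc]; exact hs a
  · exact (hc _).trans hr
  · rw [Fin.sum_univ_castSucc, hl]; simp only [hc]; ring
  · intro x y h hxy
    have hv := hs v
    change (splitGraph t.adj v {b | σ b = σ v}).Adj x y at h
    induction x using Fin.lastCases with
    | last =>
      induction y using Fin.lastCases with
      | last => exact (h.ne rfl).elim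
      | cast b =>
        rw [split_lc] at h; rw [hl, hc] at hxy
        exfalso
        have : σ b = σ v := by
          rcases h with rfl | h
          · rfl
          · exact h.1
        omega
    | cast a =>
      induction y using Fin.lastCases with
      | last =>
        rw [split_cl] at h; rw [hl, hc] at hxy
        exfalso
        have : σ a = σ v := by
          rcases h with rfl | h
          · rfl
          · exact h.1
        omega
      | cast b =>
        rw [split_cc] at h; rw [hc, hc] at hxy
        refine ⟨a, b, rfl, rfl, h.1, hxy, ?_, ?_⟩
        · rintro rfl; exact h.2.1 ⟨rfl, hxy.symm⟩
        · rintro rfl; exact h.2.2 ⟨rfl, hxy⟩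

/-- Repeated splitting along a vertex cover of the bad edges. -/
lemma cover_steps {N : ℕ} (t₀ : RTree N) (m : ℕ) : ∀ (k : ℕ) (t : RTree (N + k)) (σ : Fin (N + k) → ℤ)
    (M : Finset (Fin (N + k))), Reaches t₀ k t → (∀ v, σ v = 1 ∨ σ v = -1) → σ t.root = 1 →
    M.card = m → (∀ a b, t.adj.Adj a b → σ a = σ b → a ∈ M ∨ b ∈ M) →
    ∃ (k' : ℕ) (t' : RTree (N + k')) (σ' : Fin (N + k') → ℤ), k' = k + m ∧ Reaches t₀ k' t' ∧
      (∀ v, σ' v = 1 ∨ σ' v = -1) ∧ σ' t'.root = 1 ∧ (∀ a b, t'.adj.Adj a b → σ' b = - σ' a) ∧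
      |∑ x, σ' x - ∑ x, σ x| ≤ m := by
  induction m with
  | zero =>
    intro k t σ M hR hs hr hM hcov
    refine ⟨k, t, σ, rfl, hR, hs, hr, ?_, by simp⟩
    intro a b hab
    rw [Finset.card_eq_zero] at hM
    subst hM
    have := hcov a b hab
    simp at this
    have h1 := hs a; have h2 := hs b
    omega
  | succ m ih =>
    intro k t σ M hR hs hr hM hcov
    obtain ⟨v, hv⟩ : M.Nonempty := by rw [← Finset.card_pos]; omega
    obtain ⟨t', σ', hc, hs', hr', hsum, hcs, hbad⟩ := guided_step t σ hs hr v
    obtain ⟨k', t'', σ'', hk, hR', hs'', hr'', hval, hsum'⟩ :=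
      ih (k + 1) t' σ' ((M.erase v).map Fin.castSuccEmb) (Reaches.step k t t' hR hc) hs' hr'
        (by rw [Finset.card_map, Finset.card_erase_of_mem hv]; omega) (by
          intro x y hxy he
          obtain ⟨a, b, rfl, rfl, hab, he', ha, hb⟩ := hbad x y hxy he
          rcases hcov a b hab he' with h | h
          · left; exact Finset.mem_map.2 ⟨a, Finset.mem_erase.2 ⟨ha, h⟩, rfl⟩
          · right; exact Finset.mem_map.2 ⟨b, Finset.mem_erase.2 ⟨hb, h⟩, rfl⟩)
    refine ⟨k', t'', σ'', by omega, hR', hs'', hr'', hval, ?_⟩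
    have e : ∑ x : Fin (N + (k + 1)), σ' x = ∑ x, σ x - σ v := hsum
    have hv1 := hs v
    rw [abs_le] at hsum' ⊢
    push_cast
    constructor <;> rcases hv1 with h | h <;> rw [h] at e <;> linarith [hsum'.1, hsum'.2]

/-- Adding leaves next to vertices of a fixed sign. -/
lemma leaf_steps {N : ℕ} (t₀ : RTree N) (m : ℕ) : ∀ (k : ℕ) (t : RTree (N + k)) (σ : Fin (N + k) → ℤ)
    (u : Fin (N + k)), Reaches t₀ k t → (∀ v, σ v = 1 ∨ σ v = -1) → σ t.root = 1 →
    (∀ a b, t.adj.Adj a b → σ b = - σ a) →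
    ∃ (k' : ℕ) (t' : RTree (N + k')), k' = k + m ∧ Reaches t₀ k' t' ∧
      chi t' = - (∑ x, σ x - m * σ u) := by
  induction m with
  | zero =>
    intro k t σ u hR hs hr hval
    exact ⟨k, t, rfl, hR, by rw [chi_eq t σ hr hval]; simp⟩
  | succ m ih =>
    intro k t σ u hR hs hr hval
    obtain ⟨t', σ', hc, hs', hr', hsum, hcs, hbad⟩ := guided_step t σ hs hr u
    obtain ⟨k', t'', hk, hR', hchi⟩ := ih (k + 1) t' σ' u.castSucc (Reaches.step k t t' hR hc) hs' hr' (by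
      intro x y hxy
      by_contra hne
      have h1 := hs' x; have h2 := hs' y
      obtain ⟨a, b, -, -, hab, he, -⟩ := hbad x y hxy (by omega)
      have := hval a b hab
      have := hs a
      omega)
    refine ⟨k', t'', by omega, hR', ?_⟩
    rw [hcs] at hchi
    refine hchi.trans ?_
    have e2 : (∑ x : Fin (N + (k + 1)), σ' x) = ∑ x, σ x - σ u := hsum
    rw [e2]; push_cast; ring

lemma discrete_ivt (g : ℕ → ℤ) (z : ℤ) (n : ℕ) (hg : ∀ i < n + 1, |g (i + 1) - g i| ≤ 2)
    (hz : (g 0 ≤ z ∧ z ≤ g (n + 1)) ∨ (g (n + 1) ≤ z ∧ z ≤ g 0)) : ∃ i < n + 1, |g i - z| ≤ 2 := by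
  induction n with
  | zero =>
    refine ⟨0, by omega, ?_⟩
    have := hg 0 (by omega)
    rw [abs_le] at *
    simp only [zero_add] at *
    omega
  | succ n ih =>
    by_cases h : (g 0 ≤ z ∧ z ≤ g (n + 1)) ∨ (g (n + 1) ≤ z ∧ z ≤ g 0)
    · obtain ⟨i, hi, h'⟩ := ih (fun i hi => hg i (by omega)) h
      exact ⟨i, by omega, h'⟩
    · refine ⟨n + 1, by omega, ?_⟩
      have := hg (n + 1) (by omega)
      rw [abs_le] at *
      omega

/-- The sign function flipped on a list. -/
def flipOn {n : ℕ} (s : Fin n → ℤ) (x : List (Fin n)) (v : Fin n) : ℤ := if v ∈ x then -s v else s v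

lemma sum_flipOn {n : ℕ} (s : Fin n → ℤ) (x : List (Fin n)) (hx : x.Nodup) :
    ∑ v, flipOn s x v = ∑ v, s v - 2 * (x.map s).sum := by
  rw [← List.sum_toFinset s hx, Finset.mul_sum]
  have : ∑ v ∈ x.toFinset, 2 * s v = ∑ v, if v ∈ x then 2 * s v else 0 := by
    rw [← Finset.sum_filter]
    congr 1
    ext v; simp
  rw [this, ← Finset.sum_sub_distrib]
  refine Finset.sum_congr rfl fun v _ => ?_
  unfold flipOn
  split_ifs <;> ring

/-- A sign function close to the target, with few bad edges up to vertex cover. -/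
lemma exists_flip {N : ℕ} (t : RTree N) (s : Fin N → ℤ) (hs : ∀ v, s v = 1 ∨ s v = -1)
    (hr : s t.root = 1) (hval : ∀ a b, t.adj.Adj a b → s b = - s a) (z : ℤ) (hz : |z| ≤ |∑ v, s v|) :
    ∃ (σ : Fin N → ℤ) (M : Finset (Fin N)), (∀ v, σ v = 1 ∨ σ v = -1) ∧ σ t.root = 1 ∧
      2 ^ M.card ≤ N ∧ (∀ a b, t.adj.Adj a b → σ a = σ b → a ∈ M ∨ b ∈ M) ∧ |∑ v, σ v - z| ≤ 2 := by
  obtain ⟨p, b, l, hnd, hmem, hsz, hcov⟩ := sweep_exists _ t.adj rfl t.acyclic t.root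
  have huniv : (l ++ [t.root]).toFinset = Finset.univ := by
    ext v; simp only [List.mem_toFinset, hmem, Finset.mem_univ, iff_true]
    exact t.connected.preconnected _ _
  have hlen : (l ++ [t.root]).length = N := by
    rw [← List.toFinset_card_of_nodup hnd, huniv]; simp
  have hlen' : l.length + 1 = N := by simpa using hlen
  have hnt : ∀ i, ((l ++ [t.root]).take i).Nodup := fun i => hnd.sublist (List.take_sublist _ _)
  obtain ⟨i, hi, hiz⟩ := discrete_ivt (fun i => ∑ v, flipOn s ((l ++ [t.root]).take i) v) z l.length
    (by
      intro i hi
      rw [sum_flipOn _ _ (hnt _), sum_flipOn _ _ (hnt _)]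
      have hil : i < (l ++ [t.root]).length := by simpa using hi
      rw [List.take_add_one, List.getElem?_eq_getElem hil]
      simp only [Option.toList_some, List.map_append, List.sum_append, List.map_cons, List.map_nil, List.sum_singleton]
      have := hs (l ++ [t.root])[i]
      rw [abs_le]
      omega)
    (by
      have h1 : ((l ++ [t.root]).map s).sum = ∑ v, s v := by
        rw [← List.sum_toFinset s hnd, huniv]
      have h2 : (l ++ [t.root]).take (l.length + 1) = l ++ [t.root] := by
        rw [List.take_of_length_le]; simp
      rw [sum_flipOn _ _ (hnt _), sum_flipOn _ _ (hnt _), h2, h1]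
      simp only [List.take_zero, List.map_nil, List.sum_nil]
      rw [abs_le] at hz
      rcases abs_cases (∑ v, s v) with h | h <;> omega)
  obtain ⟨M, hM, -, hM'⟩ := hcov ((l ++ [t.root]).take i) ((l ++ [t.root]).drop i) (by simp)
  refine ⟨flipOn s ((l ++ [t.root]).take i), M, ?_, ?_, ?_, ?_, hiz⟩
  · intro v
    have := hs v
    unfold flipOn
    split_ifs <;> omega
  · have hnot : t.root ∉ (l ++ [t.root]).take i := by
      rw [List.take_append_of_le_length (by omega)]
      intro h
      have h' := List.mem_of_mem_take h
      simp [List.nodup_append] at hnd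
      exact hnd.2 _ h' rfl
    simp [flipOn, hnot, hr]
  · calc 2 ^ M.card ≤ 2 ^ p := Nat.pow_le_pow_right (by omega) hM
      _ ≤ N := by rw [← hlen]; exact hsz
  · intro a b hab he
    have hv := hval a b hab
    have ha := hs a
    have hall : ∀ v, v ∈ (l ++ [t.root]).take i ∨ v ∈ (l ++ [t.root]).drop i := by
      intro v
      rw [← List.mem_append, List.take_append_drop, hmem]
      exact t.connected.preconnected _ _
    by_cases h1 : a ∈ (l ++ [t.root]).take i
    · by_cases h2 : b ∈ (l ++ [t.root]).take i
      · simp only [flipOn, h1, h2, if_true] at he; omega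
      · exact hM' a h1 b ((hall b).resolve_left h2) hab
    · by_cases h2 : b ∈ (l ++ [t.root]).take i
      · exact (hM' b h2 a ((hall a).resolve_left h1) hab.symm).symm
      · simp only [flipOn, h1, h2, if_false] at he; omega

lemma exists_sign {N : ℕ} (t : RTree N) : ∃ s : Fin N → ℤ, (∀ v, s v = 1 ∨ s v = -1) ∧
    s t.root = 1 ∧ ∀ a b, t.adj.Adj a b → s b = - s a := by
  refine ⟨fun v => (-1) ^ (t.adj.dist t.root v), fun v => neg_one_pow_eq_or ℤ _, by simp, ?_⟩
  intro a b hab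
  have hT : t.adj.IsTree := ⟨t.connected, t.acyclic⟩
  rcases hT.dist_eq_dist_add_one_of_adj t.root hab with h | h
  · simp only [h, pow_succ]; ring
  · simp only [h, pow_succ]; ring

/-- Lemma 12: given a rooted tree `t₀` with `N` vertices and an integer `c`
with `|c| ≤ |χ(t₀)|`, there is a sequence `t₁, …, t_k` of rooted trees with
`χ(t_k) = c`, each `t_{i−1}` obtained from `t_i` by contracting an edge, and
`k ≤ 3 + 3·log₂ N`. -/
theorem lemma12 (N : ℕ) (t₀ : RTree N) (c : ℤ) (hc : |c| ≤ |chi t₀|) :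
    ∃ (k : ℕ) (t : (i : ℕ) → RTree (N + i)),
      t 0 = t₀ ∧ chi (t k) = c ∧
      (∀ i : ℕ, i < k → ContractsTo (t (i + 1)) (t i)) ∧
      (k : ℝ) ≤ 3 + 3 * Real.logb 2 (N : ℝ) := by
  obtain ⟨s, hs, hr, hval⟩ := exists_sign t₀
  have hchi := chi_eq t₀ s hr hval
  obtain ⟨σ, M, hσ, hσr, hM, hcov, hclose⟩ := exists_flip t₀ s hs hr hval (-c) (by
    rw [abs_neg]; rw [hchi, abs_neg] at hc; exact hc)
  obtain ⟨k, t, τ, hk, hR, hτ, hτr, hτv, hdist⟩ :=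
    cover_steps t₀ M.card 0 t₀ σ M Reaches.zero hσ hσr rfl hcov
  have hd : |∑ x, τ x + c| ≤ M.card + 2 := by
    have e : ∑ x : Fin (N + 0), σ x = ∑ x : Fin N, σ x := rfl
    rw [e] at hdist
    rw [abs_le] at *
    constructor <;> linarith [hdist.1, hdist.2, hclose.1, hclose.2]
  -- a vertex of the sign that needs compensation
  have hu : ∃ u, ∑ x, τ x + c = |∑ x, τ x + c| * τ u := by
    rcases le_or_gt 0 (∑ x, τ x + c) with h | h
    · exact ⟨t.root, by rw [hτr, abs_of_nonneg h, mul_one]⟩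
    · by_cases hn : ∃ u, τ u = -1
      · obtain ⟨u, hu⟩ := hn
        exact ⟨u, by rw [hu, abs_of_neg h]; ring⟩
      · exfalso
        push Not at hn
        have hall : ∀ v, τ v = 1 := fun v => (hτ v).resolve_right (hn v)
        have hsum : ∑ x, τ x = (N + k : ℕ) := by
          rw [Finset.sum_congr rfl (fun v _ => hall v)]; simp
        have hb : |∑ v, s v| ≤ (N : ℤ) := by
          refine (Finset.abs_sum_le_sum_abs _ _).trans ?_
          have : ∀ v, |s v| = 1 := fun v => by rcases hs v with h | h <;> simp [h]
          rw [Finset.sum_congr rfl (fun v _ => this v)]; simp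
        rw [hchi, abs_neg] at hc
        have h1 := hc.trans hb
        rw [abs_le] at h1
        push_cast at hsum
        omega
  obtain ⟨u, hu⟩ := hu
  obtain ⟨k', t', hk', hR', hchi'⟩ := leaf_steps t₀ (∑ x, τ x + c).natAbs k t τ u hR hτ hτr hτv
  obtain ⟨T, hT0, hTk, hT⟩ := hR'.seq
  refine ⟨k', T, hT0, ?_, hT, ?_⟩
  · rw [hTk, hchi', Int.natCast_natAbs, ← hu]; ring
  · have hkk : k' ≤ 2 * M.card + 2 := by
      have : ((∑ x, τ x + c).natAbs : ℤ) ≤ M.card + 2 := by rw [Int.natCast_natAbs]; exact hd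
      omega
    have hlog : (M.card : ℝ) ≤ Real.logb 2 N := by
      have hpos : 0 < N := lt_of_lt_of_le (by positivity) hM
      rw [Real.le_logb_iff_rpow_le (by norm_num) (by exact_mod_cast hpos), Real.rpow_natCast]
      exact_mod_cast hM
    have h0 : (0 : ℝ) ≤ M.card := Nat.cast_nonneg _
    have : (k' : ℝ) ≤ 2 * M.card + 2 := by exact_mod_cast hkk
    linarith
end

section
/- For all integers n ≥ 2 and m ≥ 1, one has a_{n,m} ≤ a_{n+1,m+1}, i.e. the number of rooted trees with n vertices and m leaves is at most the number of rooted trees with n+1 vertices and m+1 leaves. -/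
open SimpleGraph

/-- Attach a new pendant vertex `Fin.last n` to the vertex `r`. -/
def extG {n : ℕ} (G : SimpleGraph (Fin n)) (r : Fin n) : SimpleGraph (Fin (n + 1)) :=
  G.map Fin.castSuccEmb ⊔ edge (Fin.last n) (Fin.castSucc r)

lemma extG_cc {n : ℕ} (G : SimpleGraph (Fin n)) (r i j : Fin n) :
    (extG G r).Adj i.castSucc j.castSucc ↔ G.Adj i j := by
  have h1 : ∀ k : Fin n, Fin.last n ≠ k.castSucc := fun k => (Fin.castSucc_ne_last k).symm
  have h2 : ∀ k : Fin n, k.castSucc ≠ Fin.last n := fun k => (Fin.castSucc_ne_last k)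
  simp only [extG, SimpleGraph.sup_adj, edge_adj]
  constructor
  · rintro (h | h)
    · exact (SimpleGraph.map_adj_apply (f := Fin.castSuccEmb)).1 h
    · rcases h with ⟨⟨h, _⟩ | ⟨_, h⟩, _⟩
      · exact absurd h (by first | exact h1 _ | exact h2 _)
      · exact absurd h (by first | exact h1 _ | exact h2 _)
  · intro h
    exact Or.inl ((SimpleGraph.map_adj_apply (f := Fin.castSuccEmb)).2 h)

lemma extG_last {n : ℕ} (G : SimpleGraph (Fin n)) (r : Fin n) (z : Fin (n + 1)) :
    (extG G r).Adj (Fin.last n) z ↔ z = r.castSucc := by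
  have h1 : ∀ k : Fin n, Fin.last n ≠ k.castSucc := fun k => (Fin.castSucc_ne_last k).symm
  simp only [extG, SimpleGraph.sup_adj, edge_adj, SimpleGraph.map_adj]
  constructor
  · rintro (⟨a, b, _, h, _⟩ | h)
    · exact absurd h.symm (h1 a)
    · have := h1 r
      grind
  · rintro rfl
    right
    exact ⟨by simp, h1 r⟩

lemma extG_connected {n : ℕ} {G : SimpleGraph (Fin n)} (r : Fin n) (h : G.Connected) :
    (extG G r).Connected := by
  have key : ∀ x, (extG G r).Reachable r.castSucc x := by
    intro x
    induction x using Fin.lastCases with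
    | last => exact ((extG_last G r _).2 rfl).symm.reachable
    | cast i =>
      let f : G →g extG G r := ⟨Fin.castSucc, fun {a b} hab => (extG_cc G r a b).2 hab⟩
      exact (h.preconnected r i).map f
  exact ⟨fun x y => (key x).symm.trans (key y)⟩

lemma extG_acyclic {n : ℕ} {G : SimpleGraph (Fin n)} (r : Fin n) (h : G.Connected)
    (ha : G.IsAcyclic) : (extG G r).IsAcyclic := by
  have h0 := (isTree_iff_connected_and_card.1 ⟨h, ha⟩).2
  have hc := extG_connected r h
  refine (isTree_iff_connected_and_card.2 ⟨hc, ?_⟩).2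
  have h1 := hc.card_vert_le_card_edgeSet_add_one
  have h2 : (extG G r).edgeSet.ncard ≤ G.edgeSet.ncard + 1 := by
    rw [extG, edgeSet_sup, edgeSet_map]
    refine (Set.ncard_union_le _ _).trans ?_
    rw [Set.ncard_image_of_injective _ (Function.Embedding.injective _)]
    have : (edge (Fin.last n) r.castSucc).edgeSet ⊆ {s(Fin.last n, r.castSucc)} := by
      rw [edge, edgeSet_fromEdgeSet]; exact Set.sdiff_subset
    have := Set.ncard_le_ncard this
    rw [Set.ncard_singleton] at this
    omega
  simp only [Nat.card_eq_fintype_card (α := Fin _), Fintype.card_fin, Nat.card_coe_set_eq] at *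
  omega

/-- Attach a new leaf to the root. -/
def extT {n : ℕ} (t : RTree n) : RTree (n + 1) where
  adj := extG t.adj t.root
  connected := extG_connected _ t.connected
  acyclic := extG_acyclic _ t.connected t.acyclic
  root := t.root.castSucc

lemma numLeaves_extT {n : ℕ} (hn : 2 ≤ n) (t : RTree n) :
    numLeaves (extT t) = numLeaves t + 1 := by
  have hlast : IsLeafV (extT t) (Fin.last n) := by
    refine Or.inr ⟨?_, (Fin.castSucc_ne_last _).symm⟩
    have : (extT t).adj.neighborSet (Fin.last n) = {t.root.castSucc} := by
      ext z; exact extG_last _ _ z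
    rw [this, Set.ncard_singleton]
  have hcast : ∀ i, IsLeafV (extT t) i.castSucc ↔ IsLeafV t i := by
    intro i
    by_cases hi : i = t.root
    · subst hi
      constructor
      · rintro (h | h)
        · omega
        · exact absurd rfl h.2
      · rintro (h | h)
        · omega
        · exact absurd rfl h.2
    have : (extT t).adj.neighborSet i.castSucc = Fin.castSucc '' (t.adj.neighborSet i) := by
      ext z
      induction z using Fin.lastCases with
      | last =>
        constructor
        · intro h
          exact absurd (Fin.castSucc_injective _ ((extG_last _ _ _).1 h.symm)) hi
        · rintro ⟨k, _, hk⟩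
          exact absurd hk (Fin.castSucc_ne_last k)
      | cast j =>
        rw [(Fin.castSucc_injective n).mem_set_image]
        exact extG_cc _ _ i j
    have h1 : n ≠ 1 := by omega
    have h0 : n ≠ 0 := by omega
    have h2 : i.castSucc ≠ (extT t).root := fun h => hi (Fin.castSucc_injective _ h)
    simp only [IsLeafV, this, Set.ncard_image_of_injective _ (Fin.castSucc_injective n)]
    simp [h1, h0, h2, hi]
  have hS : {v | IsLeafV (extT t) v} = insert (Fin.last n) (Fin.castSucc '' {v | IsLeafV t v}) := by
    ext z
    induction z using Fin.lastCases with
    | last => simp [hlast]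
    | cast j => simp [hcast]
  have e1 : numLeaves (extT t) = {v | IsLeafV (extT t) v}.ncard := rfl
  have e2 : numLeaves t = {v | IsLeafV t v}.ncard := rfl
  rw [e1, e2, hS, Set.ncard_insert_of_notMem, Set.ncard_image_of_injective _ (Fin.castSucc_injective n)]
  rintro ⟨k, _, hk⟩
  exact absurd hk (Fin.castSucc_ne_last k)

lemma twin_swap {V : Type*} [DecidableEq V] (G : SimpleGraph V) (a b : V)
    (h : ∀ z, G.Adj a z ↔ G.Adj b z) (x y : V) :
    G.Adj (Equiv.swap a b x) (Equiv.swap a b y) ↔ G.Adj x y := by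
  have hs : ∀ x y, G.Adj x y ↔ G.Adj y x := fun x y => G.adj_comm x y
  have hi : ∀ x, ¬ G.Adj x x := fun x => G.irrefl
  simp only [Equiv.swap_apply_def]
  grind

lemma extT_rel {n : ℕ} {t t' : RTree n} (h : (treeSetoid (n + 1)).r (extT t) (extT t')) :
    (treeSetoid n).r t t' := by
  obtain ⟨e, he⟩ := h
  have he' : e t.root.castSucc = t'.root.castSucc := he
  set g : Fin (n + 1) ≃ Fin (n + 1) := e.toEquiv.trans (Equiv.swap (e (Fin.last n)) (Fin.last n))
    with hg
  have htw : ∀ z, (extT t').adj.Adj (e (Fin.last n)) z ↔ (extT t').adj.Adj (Fin.last n) z := by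
    intro z
    obtain ⟨w, rfl⟩ := e.surjective z
    rw [e.map_adj_iff]
    refine (extG_last _ _ w).trans (Iff.trans ?_ (extG_last _ _ _).symm)
    rw [← he', e.injective.eq_iff]
  have hadj : ∀ x y, (extT t').adj.Adj (g x) (g y) ↔ (extT t).adj.Adj x y := by
    intro x y
    exact (twin_swap _ _ _ htw (e x) (e y)).trans e.map_adj_iff
  have hglast : g (Fin.last n) = Fin.last n := by
    simp [hg]
  have hgroot : g t.root.castSucc = t'.root.castSucc := by
    have h1 : e t.root.castSucc ≠ e (Fin.last n) := fun h =>
      Fin.castSucc_ne_last _ (e.injective h)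
    have h2 : e t.root.castSucc ≠ Fin.last n := by rw [he']; exact Fin.castSucc_ne_last _
    have : g t.root.castSucc = Equiv.swap (e (Fin.last n)) (Fin.last n) (e t.root.castSucc) := rfl
    rw [this, Equiv.swap_apply_of_ne_of_ne h1 h2, he']
  have hex : ∀ i : Fin n, ∃ j : Fin n, j.castSucc = g i.castSucc := by
    intro i
    refine Fin.exists_castSucc_eq.2 fun h => ?_
    rw [← hglast] at h
    exact Fin.castSucc_ne_last _ (g.injective h)
  choose f hf using hex
  have hinj : Function.Injective f := by
    intro a b hab
    apply Fin.castSucc_injective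
    apply g.injective
    rw [← hf, ← hf, hab]
  refine ⟨⟨Equiv.ofBijective f (Finite.injective_iff_bijective.1 hinj), ?_⟩, ?_⟩
  · intro a b
    change t'.adj.Adj (f a) (f b) ↔ _
    rw [← extG_cc t'.adj t'.root, hf, hf]
    exact (hadj _ _).trans (extG_cc _ _ _ _)
  · change f t.root = t'.root
    apply Fin.castSucc_injective
    rw [hf, hgroot]

instance RTree.finite (n : ℕ) : Finite (RTree n) := by
  refine Finite.of_injective (fun t : RTree n => (t.adj, t.root)) ?_
  rintro ⟨a, _, _, r⟩ ⟨a', _, _, r'⟩ h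
  simp only [Prod.mk.injEq] at h
  obtain ⟨rfl, rfl⟩ := h
  rfl

lemma extT_rel' {n : ℕ} {t t' : RTree n} (h : (treeSetoid n).r t t') :
    (treeSetoid (n + 1)).r (extT t) (extT t') := by
  obtain ⟨e, he⟩ := h
  let g : Fin (n + 1) → Fin (n + 1) := Fin.lastCases (Fin.last n) (fun i => (e i).castSucc)
  have g1 : g (Fin.last n) = Fin.last n := by simp [g]
  have g2 : ∀ i : Fin n, g i.castSucc = (e i).castSucc := by simp [g]
  have hinj : Function.Injective g := by
    intro a b
    induction a using Fin.lastCases <;> induction b using Fin.lastCases <;>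
      simp [g1, g2, Fin.castSucc_ne_last, (Fin.castSucc_ne_last _).symm]
  refine ⟨⟨Equiv.ofBijective g (Finite.injective_iff_bijective.1 hinj), ?_⟩, ?_⟩
  · intro a b
    change (extG t'.adj t'.root).Adj (g a) (g b) ↔ (extG t.adj t.root).Adj a b
    induction a using Fin.lastCases with
    | last =>
      rw [g1, extG_last, extG_last]
      induction b using Fin.lastCases with
      | last => rw [g1]; simp [(Fin.castSucc_ne_last _).symm]
      | cast j => rw [g2, ← he]; simp
    | cast i =>
      induction b using Fin.lastCases with
      | last =>
        rw [g1, SimpleGraph.adj_comm, extG_last, SimpleGraph.adj_comm, extG_last, g2, ← he]; simp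
      | cast j => rw [g2, g2, extG_cc, extG_cc]; exact e.map_adj_iff
  · change g t.root.castSucc = t'.root.castSucc
    rw [g2, he]

/-- `a_{n,m} ≤ a_{n+1,m+1}` for `n ≥ 2`, `m ≥ 1`. -/
theorem aCount_mono (n m : ℕ) (hn : 2 ≤ n) (hm : 1 ≤ m) :
    aCount n m ≤ aCount (n + 1) (m + 1) := by
  unfold aCount
  refine Nat.card_le_card_of_injective
    (Quotient.map' (fun t => ⟨extT t.1, by rw [numLeaves_extT hn, t.2]⟩) ?_) ?_
  · intro a b h
    exact extT_rel' h
  · intro a b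
    induction a using Quotient.inductionOn'
    induction b using Quotient.inductionOn'
    intro h
    rw [Quotient.map'_mk'', Quotient.map'_mk''] at h
    have h2 := Quotient.eq''.1 h
    exact Quotient.sound' (extT_rel h2)
end
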